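/- arXiv:alg-geom/9703037 — 2 statements merged into one kernel-verified Lean document; each statement's English description precedes it below -/
import Mathlib

section
/- With notation as in the standard deformation of a vertically graded ideal: let F = Σ_{α ≥ 0} F_α(x,y) t^α be a function in I_t ⊆ k[[t,x,y]], where I_t is the standard deformation (with parameter r) of the vertically graded ideal I = I₀ ⊕ I₁y ⊕ ⋯ ⊕ I_{m−1}y^{m−1} ⊕ (y^m). If y divides F_α for α = 0, r, 2r, …, pr, then F₀(x,y) lies in the ideal I₀y ⊕ I₁y² ⊕ ⋯ ⊕ I_{p−1}y^p ⊕ I_{p+1}y^{p+1} ⊕ ⋯ ⊕ I_{m−1}y^{m−1} ⊕ (y^m) of k[[x,y]]. -/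
/-!
STATEMENT 14.  Notation as in the standard deformation of a vertically graded
ideal: `k[[x]] = MvPowerSeries (Fin (n-1)) k`, a vertically graded ideal
`I = I₀ ⊕ I₁y ⊕ ⋯ ⊕ I_{m−1}y^{m−1} ⊕ (y^m)` is encoded by a monotone family
`I : ℕ → Ideal k[[x]]` with `I i = ⊤` for `i ≥ m`, and an element
`F = Σ_α F_α(x,y) t^α = Σ_{α,β} F_{α,β}(x) t^α y^β` of `k[[t,x,y]]` is encoded
by its coefficient family `F : ℕ → ℕ → k[[x]]`.

`y ∣ F_α` means `F_{α,0} = 0`.  The conclusion `F₀ ∈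
I₀y ⊕ I₁y² ⊕ ⋯ ⊕ I_{p−1}y^p ⊕ I_{p+1}y^{p+1} ⊕ ⋯ ⊕ I_{m−1}y^{m−1} ⊕ (y^m)`
says on coefficients: `F_{0,0} = 0`, `F_{0,β} ∈ I_{β−1}` for `1 ≤ β ≤ p`, and
`F_{0,β} ∈ I_β` for `β > p` (for `β ≥ m` this is no condition as `I_β = ⊤`).
-/

/-- `F ∈ I_t`, expressed on coefficients: there are `a i j ∈ I i` with
`F_{α,β} = Σ_{ν : rν ≤ α} (−1)^ν C(β+ν,ν) a_{β+ν, α−rν}` for all `α, β`. -/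
def MemStdDeformation {R : Type} [CommRing R] (I : ℕ → Ideal R) (r : ℕ)
    (F : ℕ → ℕ → R) : Prop :=
  ∃ a : ℕ → ℕ → R, (∀ i j, a i j ∈ I i) ∧
    ∀ α β : ℕ, F α β =
      ∑ ν ∈ Finset.range (α / r + 1),
        ((-1 : ℤ) ^ ν * ((β + ν).choose ν : ℤ)) • a (β + ν) (α - r * ν)

theorem statement_14 (k : Type) [Field k] (n : ℕ) (m : ℕ)
    (I : ℕ → Ideal (MvPowerSeries (Fin (n - 1)) k))
    (hmono : Monotone I) (htop : ∀ i, m ≤ i → I i = ⊤)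
    (r : ℕ) (hr : 0 < r)
    (F : ℕ → ℕ → MvPowerSeries (Fin (n - 1)) k)
    (hF : MemStdDeformation I r F)
    (p : ℕ)
    (hdiv : ∀ lam : ℕ, lam ≤ p → F (lam * r) 0 = 0) :
    F 0 0 = 0 ∧
    (∀ β : ℕ, 1 ≤ β → β ≤ p → F 0 β ∈ I (β - 1)) ∧
    (∀ β : ℕ, p < β → F 0 β ∈ I β) := by
  obtain ⟨a, ha, hFa⟩ := hF
  have h0 : ∀ β, F 0 β = a β 0 := by
    intro β
    rw [hFa]
    simp
  refine ⟨by simpa using hdiv 0 (Nat.zero_le p), ?_, ?_⟩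
  · intro β h1 hp
    have h := hdiv β hp
    rw [hFa, Nat.mul_div_cancel _ hr, Finset.sum_range_succ] at h
    have hs : ∑ ν ∈ Finset.range β,
        ((-1 : ℤ) ^ ν * ((0 + ν).choose ν : ℤ)) • a (0 + ν) (β * r - r * ν) ∈ I (β - 1) := by
      refine Ideal.sum_mem _ fun ν hν => ?_
      have hν' := Finset.mem_range.mp hν
      exact zsmul_mem (hmono (by omega) (ha (0 + ν) _)) _
    have h2 := (I (β - 1)).neg_mem hs
    rw [neg_eq_of_add_eq_zero_right h] at h2
    have e : β * r - r * β = 0 := by rw [mul_comm, Nat.sub_self]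
    rw [e, zero_add, Nat.choose_self] at h2
    rw [h0]
    rcases neg_one_pow_eq_or ℤ β with h3 | h3 <;> rw [h3] at h2 <;> simpa using h2
  · intro β _
    rw [h0]
    exact ha β 0
end

section
/- For i = 1, …, ℓ let B⁽ⁱ⁾ = k[[xᵢ, yᵢ]] be a formal power series algebra in n variables (xᵢ an (n−1)-tuple), let I⁽ⁱ⁾ = I₀⁽ⁱ⁾ ⊕ I₁⁽ⁱ⁾yᵢ ⊕ ⋯ ⊕ I_{mᵢ−1}⁽ⁱ⁾yᵢ^{mᵢ−1} ⊕ (yᵢ^{mᵢ}) be a vertically graded ideal, let B = B⁽¹⁾ × ⋯ × B⁽ℓ⁾, I = I⁽¹⁾ × ⋯ × I⁽ℓ⁾, and let I_𝐭 ⊆ B[[t₁,…,t_ℓ]] be the product of the deformed ideals I⁽ⁱ⁾_𝐭 = I₀⁽ⁱ⁾[[𝐭]] ⊕ I₁⁽ⁱ⁾[[𝐭]](yᵢ−tᵢ) ⊕ ⋯ ⊕ I_{mᵢ−1}⁽ⁱ⁾[[𝐭]](yᵢ−tᵢ)^{mᵢ−1} ⊕ ((yᵢ−tᵢ)^{mᵢ}).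 Let y = (y₁,…,y_ℓ) ∈ B and for a k-linear subspace V ⊆ B set V_{res(y)} = { v ∈ B : vy ∈ V }. Suppose there exist nonnegative integers p₁, …, p_ℓ such that: (1) the canonical map V/(V ∩ (y)) → k[[x₁]]/I⁽¹⁾_{p₁} × ⋯ × k[[x_ℓ]]/I⁽ℓ⁾_{p_ℓ} is injective; and (2) the canonical map V_{res(y)} → B/J is injective, where J = J⁽¹⁾ × ⋯ × J⁽ℓ⁾ with J⁽ⁱ⁾ = I₀⁽ⁱ⁾ ⊕ I₁⁽ⁱ⁾yᵢ ⊕ ⋯ ⊕ I_{pᵢ−1}⁽ⁱ⁾yᵢ^{pᵢ−1} ⊕ I_{pᵢ+1}⁽ⁱ⁾yᵢ^{pᵢ} ⊕ ⋯ ⊕ I_{mᵢ−1}⁽ⁱ⁾yᵢ^{mᵢ−2} ⊕ (yᵢ^{mᵢ−1}). Then the canonical map φ_𝐭 : V ⊗ k[[t₁,…,t_ℓ]] → B[[𝐭]]/I_𝐭 is generically injective. -/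
/-!
STATEMENT 15 (the formal lemma).

For `i = 1,…,ℓ`, `B⁽ⁱ⁾ = k[[xᵢ,yᵢ]]` is a formal power series algebra in `n`
variables; we realise it as `PowerSeries R` (the variable being `yᵢ`) with
`R = k[[x]] = MvPowerSeries (Fin (n-1)) k`, so that
`B = B⁽¹⁾ × ⋯ × B⁽ℓ⁾ = Fin ℓ → PowerSeries R`.

The vertically graded ideal
`I⁽ⁱ⁾ = I₀⁽ⁱ⁾ ⊕ I₁⁽ⁱ⁾yᵢ ⊕ ⋯ ⊕ I_{mᵢ−1}⁽ⁱ⁾yᵢ^{mᵢ−1} ⊕ (yᵢ^{mᵢ})` is encoded by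
a monotone family `Ii i : ℕ → Ideal R` with `Ii i q = ⊤` for `q ≥ m i`; then
`f ∈ I⁽ⁱ⁾ ↔ ∀ β, coeff β f ∈ Ii i β`.

`y = (y₁,…,y_ℓ)` is the element with components `PowerSeries.X`; for a
`k`-subspace `V ⊆ B`, `V_{res(y)} = {v | y·v ∈ V}`, and `v ∈ (y)` iff each
component of `v` has vanishing constant term.

Hypothesis (1) — injectivity of `V/(V∩(y)) → Π R/I⁽ⁱ⁾_{pᵢ}` (the map sends
`v` to its constant `y`-coefficients): if all constant `y`-coefficients of
`v ∈ V` lie in the `I⁽ⁱ⁾_{pᵢ}`, then they all vanish.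

Hypothesis (2) — injectivity of `V_{res(y)} → B/J`, where the coefficient of
`yᵢ^β` in `J⁽ⁱ⁾` is `I⁽ⁱ⁾_β` for `β < pᵢ` and `I⁽ⁱ⁾_{β+1}` for `β ≥ pᵢ`
(which is `⊤` for `β ≥ mᵢ − 1`).

Conclusion — generic injectivity of `φ_𝐭 : V ⊗ k[[t₁,…,t_ℓ]] → B[[𝐭]]/I_𝐭`.
An element of `V ⊗ k[[𝐭]]` is a finite sum `Σ_j s_j ⊗ w_j` (`s_j ∈ k[[𝐭]]`,
`w_j ∈ V`); its image in `B[[𝐭]]` has `i`-th component with coefficient of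
`𝐭^μ yᵢ^β` equal to `Σ_j (coeff_μ s_j) • (coeff_β (w_j)ᵢ)`.  Membership in
`I_𝐭` (the product of the deformed ideals
`I⁽ⁱ⁾_𝐭 = ⊕_q I_q⁽ⁱ⁾[[𝐭]](yᵢ−tᵢ)^q ⊕ ((yᵢ−tᵢ)^{mᵢ})`) is expressed, as in the
one-variable case, by the finite coefficient identities below (deformation
parameter `r = 1` in the variable `tᵢ` for the `i`-th factor).  Since
`V ⊗ k[[𝐭]] → B[[𝐭]]` is injective and `V ⊗ k[[𝐭]]` is a torsion-free
`k[[𝐭]]`-module, generic injectivity of `φ_𝐭` means exactly: any element of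
`V ⊗ k[[𝐭]]` whose image lies in `I_𝐭` is zero, i.e. all coefficients
`Σ_j (coeff_μ s_j) • w_j ∈ B` vanish.
-/

theorem statement_15 (k : Type) [Field k] (n ℓ : ℕ)
    (m : Fin ℓ → ℕ)
    (Ii : Fin ℓ → ℕ → Ideal (MvPowerSeries (Fin (n - 1)) k))
    (hmono : ∀ i, Monotone (Ii i))
    (htop : ∀ i q, m i ≤ q → Ii i q = ⊤)
    (V : Submodule k (Fin ℓ → PowerSeries (MvPowerSeries (Fin (n - 1)) k)))
    (p : Fin ℓ → ℕ)
    -- (1) injectivity of `V/(V ∩ (y)) → k[[x₁]]/I⁽¹⁾_{p₁} × ⋯ × k[[x_ℓ]]/I⁽ℓ⁾_{p_ℓ}`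
    (hyp1 : ∀ v ∈ V,
      (∀ i, PowerSeries.constantCoeff (v i) ∈ Ii i (p i)) →
      ∀ i, PowerSeries.constantCoeff (v i) = 0)
    -- (2) injectivity of `V_{res(y)} → B/J`
    (hyp2 : ∀ v : Fin ℓ → PowerSeries (MvPowerSeries (Fin (n - 1)) k),
      (fun i => PowerSeries.X * v i) ∈ V →
      (∀ (i : Fin ℓ) (β : ℕ),
        PowerSeries.coeff β (v i) ∈
          (if β < p i then Ii i β else Ii i (β + 1))) →
      v = 0) :
    -- generic injectivity of `φ_𝐭 : V ⊗ k[[t₁,…,t_ℓ]] → B[[𝐭]]/I_𝐭`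
    ∀ (N : ℕ) (w : Fin N → (Fin ℓ → PowerSeries (MvPowerSeries (Fin (n - 1)) k)))
      (hw : ∀ j, w j ∈ V) (s : Fin N → MvPowerSeries (Fin ℓ) k),
      -- the image of `Σ_j s_j ⊗ w_j` lies in `I_𝐭` :
      (∀ i : Fin ℓ, ∃ a : ℕ → (Fin ℓ →₀ ℕ) → MvPowerSeries (Fin (n - 1)) k,
        (∀ q μ, a q μ ∈ Ii i q) ∧
        ∀ (μ : Fin ℓ →₀ ℕ) (β : ℕ),
          (∑ j, MvPowerSeries.coeff (R := k) μ (s j) • PowerSeries.coeff β (w j i)) =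
            ∑ ν ∈ Finset.range (μ i + 1),
              ((-1 : ℤ) ^ ν * ((β + ν).choose ν : ℤ)) •
                a (β + ν) (μ - Finsupp.single i ν)) →
      -- then `Σ_j s_j ⊗ w_j = 0` :
      ∀ μ : Fin ℓ →₀ ℕ, (∑ j, MvPowerSeries.coeff (R := k) μ (s j) • w j) = 0 := by
  intro N w hw s hmem
  choose a ha hcoef using hmem
  -- weights
  obtain ⟨M, r, hrpos, hr⟩ : ∃ (M : ℕ) (r : Fin ℓ → ℕ), (∀ i, 0 < r i) ∧
      ∀ i, r i * (2 * p i + 1) = 2 * M := by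
    refine ⟨∏ j, (2 * p j + 1), fun i => 2 * ∏ j ∈ Finset.univ.erase i, (2 * p j + 1), ?_, ?_⟩
    · intro i
      have : 0 < ∏ j ∈ Finset.univ.erase i, (2 * p j + 1) :=
        Finset.prod_pos (fun j _ => by omega)
      exact Nat.mul_pos two_pos this
    · intro i
      have := Finset.prod_erase_mul Finset.univ (fun j => 2 * p j + 1) (Finset.mem_univ i)
      rw [mul_assoc, this]
  have hr1 : ∀ i, p i * r i ≤ M := fun i => by nlinarith [hr i, hrpos i]
  have hr2 : ∀ i ν, ν * r i ≤ M → ν ≤ p i := fun i ν h => by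
    by_contra hc
    have h1 : p i + 1 ≤ ν := by omega
    have h2 := Nat.mul_le_mul_right (r i) h1
    nlinarith [hr i, hrpos i]
  let wt : (Fin ℓ →₀ ℕ) → ℕ := fun μ => ∑ i, μ i * r i
  have wt_add : ∀ μ ν, wt (μ + ν) = wt μ + wt ν := fun μ ν => by
    simp [wt, add_mul, Finset.sum_add_distrib]
  have wt_single : ∀ i ν, wt (Finsupp.single i ν) = ν * r i := fun i ν => by
    simp only [wt]
    rw [Finset.sum_eq_single i]
    · simp
    · intro b _ hb
      simp [Finsupp.single_eq_of_ne hb]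
    · simp
  have wt_sub : ∀ μ i ν, ν ≤ μ i → wt (μ - Finsupp.single i ν) + ν * r i = wt μ := by
    intro μ i ν h
    rw [← wt_single, ← wt_add, tsub_add_cancel_of_le]
    simpa using h
  set F : (Fin ℓ →₀ ℕ) → (Fin ℓ → PowerSeries (MvPowerSeries (Fin (n - 1)) k)) :=
    fun μ => ∑ j, MvPowerSeries.coeff (R := k) μ (s j) • w j with hF
  have hFV : ∀ μ, F μ ∈ V := fun μ => V.sum_mem fun j _ => V.smul_mem _ (hw j)
  have hFc : ∀ i μ β, PowerSeries.coeff β (F μ i) =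
      ∑ ν ∈ Finset.range (μ i + 1), ((-1 : ℤ) ^ ν * ((β + ν).choose ν : ℤ)) •
                a i (β + ν) (μ - Finsupp.single i ν) := by
    intro i μ β
    rw [← hcoef]
    simp only [hF, Finset.sum_apply, map_sum]
    rfl
  have key : ∀ W μ, wt μ = W → F μ = 0 := by
    intro W
    induction W using Nat.strong_induction_on with
    | _ W ih =>
    intro μ₀ hμ₀
    have ih' : ∀ μ, wt μ < W → F μ = 0 := fun μ h => ih _ h μ rfl
    -- low order parts of `a` vanish
    have hlow : ∀ i, ∀ U μ, wt μ = U → U < W → ∀ q, a i q μ = 0 := by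
      intro i U
      induction U using Nat.strong_induction_on with
      | _ U ihU =>
      intro μ hμ hUW q
      have h := hFc i μ q
      rw [ih' μ (by omega), Finset.sum_range_succ', Finset.sum_eq_zero] at h
      · simpa using h.symm
      · intro ν hν
        have h1 := wt_sub μ i (ν + 1) (by simpa using hν)
        have h2 : 0 < (ν + 1) * r i := Nat.mul_pos (by omega) (hrpos i)
        rw [ihU _ (by omega) _ rfl (by omega), smul_zero]
    have hlow' : ∀ i μ, wt μ < W → ∀ q, a i q μ = 0 := fun i μ h q => hlow i _ μ rfl h q
    -- constant coefficients vanish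
    have hconst : ∀ μ, wt μ ≤ W + M → ∀ i, PowerSeries.constantCoeff (F μ i) = 0 := by
      intro μ hμ
      apply hyp1 _ (hFV μ)
      intro i
      rw [← PowerSeries.coeff_zero_eq_constantCoeff_apply, hFc]
      refine Ideal.sum_mem _ fun ν hν => zsmul_mem ?_ _
      have h1 := wt_sub μ i ν (by simpa [Nat.lt_succ_iff] using hν)
      by_cases h2 : wt (μ - Finsupp.single i ν) < W
      · rw [hlow' i _ h2]
        exact Ideal.zero_mem _
      · have h3 : ν ≤ p i := hr2 i ν (by omega)
        exact hmono i (by omega) (ha i _ _)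
    have htopc : ∀ i β, PowerSeries.coeff β (F μ₀ i) = a i β μ₀ := by
      intro i β
      rw [hFc, Finset.sum_range_succ', Finset.sum_eq_zero]
      · simp
      · intro ν hν
        have h1 := wt_sub μ₀ i (ν + 1) (by simpa using hν)
        have h2 : 0 < (ν + 1) * r i := Nat.mul_pos (by omega) (hrpos i)
        rw [hlow' i _ (by omega), smul_zero]
    have hdvd : ∀ i, ∃ g, F μ₀ i = PowerSeries.X * g := fun i =>
      PowerSeries.X_dvd_iff.mpr (hconst μ₀ (by omega) i)
    choose g hg using hdvd
    have hgF : (fun i => PowerSeries.X * g i) = F μ₀ := funext fun i => (hg i).symm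
    have hg0 : g = 0 := by
      apply hyp2 g (by rw [hgF]; exact hFV μ₀)
      intro i β
      have hgc : PowerSeries.coeff β (g i) = a i (β + 1) μ₀ := by
        rw [← htopc, hg, PowerSeries.coeff_succ_X_mul]
      rw [hgc]
      split_ifs with hβ
      · have hw1 : wt (μ₀ + Finsupp.single i (β + 1)) = W + (β + 1) * r i := by
          rw [wt_add, wt_single, hμ₀]
        have hw2 : (β + 1) * r i ≤ p i * r i := Nat.mul_le_mul_right _ hβ
        have h0 := hconst (μ₀ + Finsupp.single i (β + 1)) (by have := hr1 i; omega) i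
        rw [← PowerSeries.coeff_zero_eq_constantCoeff_apply, hFc,
          ← Finset.add_sum_erase _ _ (a := β + 1) (by simp)] at h0
        have hrest := eq_neg_of_add_eq_zero_left h0
        rw [add_tsub_cancel_right] at hrest
        have hm : ((-1 : ℤ) ^ (β + 1) * ((0 + (β + 1)).choose (β + 1) : ℤ)) •
            a i (0 + (β + 1)) μ₀ ∈ Ii i β := by
          rw [hrest]
          refine neg_mem (Ideal.sum_mem _ fun ν hν => zsmul_mem ?_ _)
          rw [Finset.mem_erase, Finset.mem_range] at hν
          by_cases h2 : ν ≤ β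
          · exact hmono i (by omega) (ha i _ _)
          · have h1 := wt_sub (μ₀ + Finsupp.single i (β + 1)) i ν (by omega)
            have h3 : (β + 2) * r i ≤ ν * r i := Nat.mul_le_mul_right _ (by omega)
            have h4 := hrpos i
            rw [hlow' i _ (by nlinarith)]
            exact Ideal.zero_mem _
        simp only [zero_add, Nat.choose_self, Nat.cast_one, mul_one] at hm
        rcases neg_one_pow_eq_or ℤ (β + 1) with h | h <;> rw [h] at hm <;> simpa using hm
      · exact ha i _ _
    rw [← hgF, hg0]
    funext i
    simp
  exact fun μ => key _ μ rfl
end
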